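/- Let G be a finite connected simple graph with vertex set V. If G is regular or biregular, then the evolution algebras A(G) and A_RW(G) on ℝ^V are isomorphic as algebras. Conversely, if G is non-singular (its adjacency matrix is invertible) and A_RW(G) is isomorphic to A(G) as an algebra, then G is a regular graph or a biregular graph. -/

import Mathlib

noncomputable section

/-- The degree of vertex `i` in a finite graph with adjacency coefficients `a`. -/
def deg {V : Type*} [Fintype V] (a : V → V → ℝ) (i : V) : ℝ := ∑ k, a k i

/-- The product of the evolution algebra `A(G)` on `ℝ^V`:
`(v · w)_k = ∑_i v_i w_i a_{ki}`, i.e. `e_i · e_i = ∑_k a_{ki} e_k`, `e_i · e_j = 0`. -/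
def prodA {V : Type*} [Fintype V] (a : V → V → ℝ) (v w : V → ℝ) : V → ℝ :=
  fun k => ∑ i, v i * w i * a k i

/-- The product of the evolution algebra `A_RW(G)` on `ℝ^V`:
`(v · w)_k = ∑_i v_i w_i a_{ki}/deg(i)`. -/
def prodRW {V : Type*} [Fintype V] (a : V → V → ℝ) (v w : V → ℝ) : V → ℝ :=
  fun k => ∑ i, v i * w i * (a k i / deg a i)

/-- The finite graph is regular: all degrees are equal. -/
def GraphRegular {V : Type*} [Fintype V] (a : V → V → ℝ) : Prop :=
  ∃ d : ℝ, ∀ i, deg a i = d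

/-- The finite graph is biregular: `V = V₁ ⊔ V₂` with every edge joining `V₁` to `V₂` and
constant degrees on `V₁` and on `V₂`. -/
def GraphBiregular {V : Type*} [Fintype V] (a : V → V → ℝ) : Prop :=
  ∃ (V₁ : Set V) (d₁ d₂ : ℝ),
    (∀ i ∈ V₁, deg a i = d₁) ∧ (∀ i ∉ V₁, deg a i = d₂) ∧
    ∀ i k, a k i = 1 → ((i ∈ V₁ ∧ k ∉ V₁) ∨ (i ∉ V₁ ∧ k ∈ V₁))

/-!
Both products have the form `v · w = M (v * w)`, with `v * w` the coordinatewise product and `M` the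
structure matrix. The monomial map `e_i ↦ α i • e_{π i}` is multiplicative from the structure matrix
`M` to `N` if and only if `α k * M k i = α i ^ 2 * N (π k) (π i)` for all `k`, `i`.

With `π = 1`, an isomorphism `A(G) → A_RW(G)` is thus given by nonzero weights such that
`α k * deg i = α i ^ 2` on every edge `ki`: constant weights `d` for a `d`-regular graph, and
`(d₁² d₂)^(1/3)` on `V₁`, `(d₁ d₂²)^(1/3)` on `V₂` for a biregular one.

Conversely, if the structure matrix of the target is invertible, an isomorphism maps vectors with
disjoint supports to vectors with disjoint supports, hence is monomial. For `A_RW(G) → A(G)` the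
criterion reads `α k = deg i * α i ^ 2` on every edge `ki`. So all neighbours of `i` have the same
weight and then, by the reversed edges, the same degree; connectedness does the rest.
-/

section MonomialEquiv

variable {V R : Type*} [CommSemiring R]

/-- The monomial linear automorphism `e_i ↦ α i • e_{π i}` of `V → R`. -/
def monomialEquiv (π : Equiv.Perm V) (α : V → Rˣ) : (V → R) ≃ₗ[R] (V → R) :=
  (LinearEquiv.piCongrRight fun i => LinearEquiv.smulOfUnit (α i)).trans
    (LinearEquiv.funCongrLeft R R π.symm)

theorem monomialEquiv_apply_perm (π : Equiv.Perm V) (α : V → Rˣ) (v : V → R) (i : V) :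
    monomialEquiv π α v (π i) = α i * v i := by
  simp [monomialEquiv, LinearMap.funLeft_apply, LinearEquiv.smulOfUnit, Units.smul_def]

theorem monomialEquiv_single [DecidableEq V] (π : Equiv.Perm V) (α : V → Rˣ) (i : V) :
    monomialEquiv π α (Pi.single i 1) = Pi.single (π i) (α i : R) := by
  ext m
  obtain ⟨k, rfl⟩ := π.surjective m
  rw [monomialEquiv_apply_perm]
  by_cases hki : k = i <;> simp [hki, π.injective.eq_iff]

theorem exists_eq_monomialEquiv {K : Type*} [Field K] [Finite V] (e : (V → K) ≃ₗ[K] (V → K))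
    (he : ∀ v w, v * w = 0 → e v * e w = 0) :
    ∃ (π : Equiv.Perm V) (α : V → Kˣ), e = monomialEquiv π α := by
  classical
  have disjoint_images {i j : V} (hij : i ≠ j) (m : V) :
      e (Pi.single i 1) m = 0 ∨ e (Pi.single j 1) m = 0 := by
    have hsingle : (Pi.single i 1 * Pi.single j 1 : V → K) = 0 := by
      rw [← Pi.single_mul_left, Pi.single_eq_of_ne hij, mul_zero, Pi.single_zero]
    exact mul_eq_zero.mp (congrFun (he _ _ hsingle) m)
  have exists_mem_support (i : V) : ∃ m, e (Pi.single i 1) m ≠ 0 :=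
    Function.ne_iff.mp (e.map_ne_zero_iff.mpr (Pi.single_ne_zero_iff.mpr one_ne_zero))
  choose p hp using exists_mem_support
  have p_injective : Function.Injective p := fun i j hij => by
    by_contra hne
    exact (disjoint_images hne (p i)).elim (hp i) (hij ▸ hp j)
  let π : Equiv.Perm V := Equiv.ofBijective p (Finite.injective_iff_bijective.mp p_injective)
  refine ⟨π, fun i => Units.mk0 _ (hp i), LinearEquiv.toLinearMap_injective ?_⟩
  refine (Pi.basisFun K V).ext fun i => funext fun m => ?_
  obtain ⟨k, rfl⟩ := π.surjective m
  simp only [Pi.basisFun_apply, LinearEquiv.coe_coe, monomialEquiv_apply_perm, Units.val_mk0]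
  by_cases hik : i = k
  · subst hik
    rw [Pi.single_eq_same, mul_one]
    rfl
  · rw [Pi.single_eq_of_ne (Ne.symm hik), mul_zero]
    exact (disjoint_images hik (p k)).resolve_right (hp k)

end MonomialEquiv

section EvolutionAlgebra

variable {V R : Type*} [Fintype V] [CommRing R]

/-- The product of the evolution algebra on `V → R` with structure matrix `M`, whose `i`-th column
is `e_i · e_i`; it is a common form for `prodA` and `prodRW`. -/
def evolMul (M : Matrix V V R) (v w : V → R) : V → R := M.mulVec (v * w)

theorem evolMul_apply (M : Matrix V V R) (v w : V → R) (k : V) :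
    evolMul M v w k = ∑ i, M k i * (v i * w i) := rfl

theorem evolMul_single_self [DecidableEq V] (M : Matrix V V R) (i : V) (r : R) (k : V) :
    evolMul M (Pi.single i r) (Pi.single i r) k = M k i * r ^ 2 := by
  rw [evolMul, ← Pi.single_mul, Matrix.mulVec_single]
  simp [sq]

theorem monomialEquiv_evolMul_iff (M N : Matrix V V R) (π : Equiv.Perm V) (α : V → Rˣ) :
    (∀ v w, monomialEquiv π α (evolMul M v w) =
        evolMul N (monomialEquiv π α v) (monomialEquiv π α w)) ↔
      ∀ k i, α k * M k i = α i ^ 2 * N (π k) (π i) := by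
  classical
  constructor
  · intro h k i
    have hki := congrFun (h (Pi.single i 1) (Pi.single i 1)) (π k)
    rw [monomialEquiv_apply_perm, monomialEquiv_single, evolMul_single_self,
      evolMul_single_self] at hki
    linear_combination hki
  · intro h v w
    ext m
    obtain ⟨k, rfl⟩ := π.surjective m
    calc monomialEquiv π α (evolMul M v w) (π k)
        = ∑ i, α k * (M k i * (v i * w i)) := by
          rw [monomialEquiv_apply_perm, evolMul_apply, Finset.mul_sum]
      _ = ∑ i, N (π k) (π i) * (monomialEquiv π α v (π i) * monomialEquiv π α w (π i)) := by
          refine Finset.sum_congr rfl fun i _ => ?_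
          simp only [monomialEquiv_apply_perm]
          linear_combination (v i * w i) * h k i
      _ = evolMul N (monomialEquiv π α v) (monomialEquiv π α w) (π k) := by
          rw [evolMul_apply]
          exact Equiv.sum_comp π fun m =>
            N (π k) m * (monomialEquiv π α v m * monomialEquiv π α w m)

theorem mul_eq_zero_of_map_evolMul [IsDomain R] [DecidableEq V] {M N : Matrix V V R}
    (hN : N.det ≠ 0) (e : (V → R) →ₗ[R] (V → R))
    (he : ∀ v w, e (evolMul M v w) = evolMul N (e v) (e w)) {v w : V → R} (hvw : v * w = 0) :
    e v * e w = 0 := by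
  refine Matrix.eq_zero_of_mulVec_eq_zero hN ?_
  calc N.mulVec (e v * e w) = e (M.mulVec (v * w)) := (he v w).symm
    _ = 0 := by rw [hvw, Matrix.mulVec_zero, map_zero]

end EvolutionAlgebra

section Graph

variable {V : Type*} [Fintype V] {a : V → V → ℝ}

/-- The structure matrix of `A_RW(G)`: the transposed transition matrix of the simple random walk.
The column of a vertex of degree `0` is `0`. -/
def rwMatrix (a : V → V → ℝ) : Matrix V V ℝ := Matrix.of fun k i => a k i / deg a i

theorem prodA_eq_evolMul (v w : V → ℝ) : prodA a v w = evolMul (Matrix.of a) v w := by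
  ext k
  simp [prodA, evolMul_apply, mul_comm]

theorem prodRW_eq_evolMul (v w : V → ℝ) : prodRW a v w = evolMul (rwMatrix a) v w := by
  ext k
  simp [prodRW, evolMul_apply, rwMatrix, mul_comm]

theorem deg_pos_iff_exists_edge (hval : ∀ k i, a k i = 0 ∨ a k i = 1) (i : V) :
    0 < deg a i ↔ ∃ k, a k i = 1 := by
  have nonneg (k : V) : 0 ≤ a k i := by rcases hval k i with h | h <;> simp [h]
  have pos_iff (k : V) : 0 < a k i ↔ a k i = 1 := by rcases hval k i with h | h <;> simp [h]
  simp [deg, Finset.sum_pos_iff_of_nonneg fun k _ => nonneg k, pos_iff]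

theorem deg_pos_of_det_ne_zero [DecidableEq V] (hval : ∀ k i, a k i = 0 ∨ a k i = 1)
    (hdet : (Matrix.of a).det ≠ 0) (i : V) : 0 < deg a i := by
  rw [deg_pos_iff_exists_edge hval]
  by_contra! hno_edge
  exact hdet (Matrix.det_eq_zero_of_column_eq_zero i fun k =>
    (hval k i).resolve_right (hno_edge k))

theorem GraphRegular.exists_weights (hdeg : ∀ i, 0 < deg a i) (h : GraphRegular a) :
    ∃ α : V → ℝˣ, ∀ k i, a k i = 1 → (α k * deg a i : ℝ) = α i ^ 2 := by
  obtain ⟨d, hd⟩ := h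
  refine ⟨fun i => Units.mk0 (deg a i) (hdeg i).ne', fun k i _ => ?_⟩
  simp only [Units.val_mk0, hd, sq]

theorem GraphBiregular.exists_weights (hval : ∀ k i, a k i = 0 ∨ a k i = 1)
    (hdeg : ∀ i, 0 < deg a i) (h : GraphBiregular a) :
    ∃ α : V → ℝˣ, ∀ k i, a k i = 1 → (α k * deg a i : ℝ) = α i ^ 2 := by
  classical
  obtain ⟨S, d₁, d₂, hd₁, hd₂, hS⟩ := h
  -- If there is a vertex, both parts are nonempty, so `d₁` and `d₂` are genuine degrees.
  have degrees_pos (i : V) : 0 < d₁ ∧ 0 < d₂ := by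
    obtain ⟨k, hki⟩ := (deg_pos_iff_exists_edge hval i).mp (hdeg i)
    rcases hS i k hki with ⟨hi, hk⟩ | ⟨hi, hk⟩
    · exact ⟨hd₁ i hi ▸ hdeg i, hd₂ k hk ▸ hdeg k⟩
    · exact ⟨hd₁ k hk ▸ hdeg k, hd₂ i hi ▸ hdeg i⟩
  have cube_rpow {d : ℝ} (hd : 0 < d) : (d ^ (3⁻¹ : ℝ)) ^ 3 = d :=
    mod_cast Real.rpow_inv_natCast_pow hd.le three_ne_zero
  set u : ℝ := d₁ ^ (3⁻¹ : ℝ)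
  set w : ℝ := d₂ ^ (3⁻¹ : ℝ)
  have weight_ne_zero (i : V) : (if i ∈ S then u ^ 2 * w else u * w ^ 2) ≠ 0 := by
    have hu : 0 < u := Real.rpow_pos_of_pos (degrees_pos i).1 _
    have hw : 0 < w := Real.rpow_pos_of_pos (degrees_pos i).2 _
    split_ifs <;> positivity
  refine ⟨fun i => Units.mk0 _ (weight_ne_zero i), fun k i hki => ?_⟩
  simp only [Units.val_mk0]
  rcases hS i k hki with ⟨hi, hk⟩ | ⟨hi, hk⟩
  · rw [if_neg hk, if_pos hi, hd₁ i hi, ← cube_rpow (degrees_pos i).1]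
    ring
  · rw [if_pos hk, if_neg hi, hd₂ i hi, ← cube_rpow (degrees_pos i).2]
    ring

theorem exists_prodA_equiv_prodRW_of_weights (hval : ∀ k i, a k i = 0 ∨ a k i = 1)
    (hdeg : ∀ i, 0 < deg a i) {α : V → ℝˣ}
    (hα : ∀ k i, a k i = 1 → (α k * deg a i : ℝ) = α i ^ 2) :
    ∃ e : (V → ℝ) ≃ₗ[ℝ] (V → ℝ), ∀ v w, e (prodA a v w) = prodRW a (e v) (e w) := by
  refine ⟨monomialEquiv 1 α, ?_⟩
  simp only [prodA_eq_evolMul, prodRW_eq_evolMul]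
  refine (monomialEquiv_evolMul_iff _ _ _ _).mpr fun k i => ?_
  have hi : deg a i ≠ 0 := (hdeg i).ne'
  rcases hval k i with hki | hki
  · simp [rwMatrix, hki]
  · simp [rwMatrix, hki, ← hα k i hki, hi]

theorem exists_weights_of_prodRW_equiv_prodA [DecidableEq V]
    (hval : ∀ k i, a k i = 0 ∨ a k i = 1) (hdet : (Matrix.of a).det ≠ 0)
    (e : (V → ℝ) ≃ₗ[ℝ] (V → ℝ)) (he : ∀ v w, e (prodRW a v w) = prodA a (e v) (e w)) :
    ∃ α : V → ℝˣ, ∀ k i, a k i = 1 → (α k : ℝ) = deg a i * α i ^ 2 := by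
  simp only [prodA_eq_evolMul, prodRW_eq_evolMul] at he
  obtain ⟨π, α, rfl⟩ := exists_eq_monomialEquiv e fun v w =>
    mul_eq_zero_of_map_evolMul hdet e.toLinearMap he
  refine ⟨α, fun k i hki => ?_⟩
  have hi : deg a i ≠ 0 := (deg_pos_of_det_ne_zero hval hdet i).ne'
  have hmul : (α k * (1 / deg a i) : ℝ) = α i ^ 2 * a (π k) (π i) := by
    simpa [rwMatrix, hki] using (monomialEquiv_evolMul_iff _ _ _ _).mp he k i
  have perm_edge : a (π k) (π i) = 1 := by
    refine (hval _ _).resolve_left fun hzero => ?_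
    rw [hzero, mul_zero] at hmul
    exact mul_ne_zero (α k).ne_zero (one_div_ne_zero hi) hmul
  rw [perm_edge] at hmul
  field_simp at hmul
  linear_combination hmul

theorem deg_eq_of_common_neighbor_of_weights (hsym : ∀ k i, a k i = a i k) {α : V → ℝˣ}
    (hα : ∀ k i, a k i = 1 → (α k : ℝ) = deg a i * α i ^ 2)
    {i k l : V} (hk : a k i = 1) (hl : a l i = 1) : deg a k = deg a l := by
  have hkl : (α k : ℝ) = α l := (hα k i hk).trans (hα l i hl).symm
  refine mul_right_cancel₀ (pow_ne_zero 2 (α k).ne_zero) ?_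
  calc deg a k * (α k : ℝ) ^ 2 = α i := (hα i k (hsym i k ▸ hk)).symm
    _ = deg a l * (α l : ℝ) ^ 2 := hα i l (hsym i l ▸ hl)
    _ = deg a l * (α k : ℝ) ^ 2 := by rw [hkl]

theorem deg_alternates_of_common_neighbor (hsym : ∀ k i, a k i = a i k)
    (hconn : ∀ i j : V, Relation.ReflTransGen (fun x y => a x y = 1) i j)
    (h : ∀ i k l, a k i = 1 → a l i = 1 → deg a k = deg a l) {o p : V} (hp : a p o = 1) (i : V) :
    (deg a i = deg a o ∧ ∀ k, a k i = 1 → deg a k = deg a p) ∨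
      (deg a i = deg a p ∧ ∀ k, a k i = 1 → deg a k = deg a o) := by
  induction hconn o i with
  | refl => exact Or.inl ⟨rfl, fun k hk => h o k p hk hp⟩
  | @tail x y _ hxy ih =>
    have hyx : a y x = 1 := hsym y x ▸ hxy
    rcases ih with ⟨hx, hnbr⟩ | ⟨hx, hnbr⟩
    · exact Or.inr ⟨hnbr y hyx, fun k hk => (h y k x hk hxy).trans hx⟩
    · exact Or.inl ⟨hnbr y hyx, fun k hk => (h y k x hk hxy).trans hx⟩

theorem regular_or_biregular_of_common_neighbor (hsym : ∀ k i, a k i = a i k)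
    (hconn : ∀ i j : V, Relation.ReflTransGen (fun x y => a x y = 1) i j)
    (h : ∀ i k l, a k i = 1 → a l i = 1 → deg a k = deg a l) :
    GraphRegular a ∨ GraphBiregular a := by
  obtain _ | ⟨⟨o⟩⟩ := isEmpty_or_nonempty V
  · exact Or.inl ⟨0, isEmptyElim⟩
  by_cases! isolated : ∀ p, a p o ≠ 1
  · have eq_o (i : V) : o = i := (hconn o i).cases_head.resolve_right
      fun ⟨p, hop, _⟩ => isolated p (hsym p o ▸ hop)
    exact Or.inl ⟨deg a o, fun i => eq_o i ▸ rfl⟩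
  obtain ⟨p, hp⟩ := isolated
  have alternate := deg_alternates_of_common_neighbor hsym hconn h hp
  by_cases hop : deg a o = deg a p
  · refine Or.inl ⟨deg a o, fun i => ?_⟩
    rcases alternate i with ⟨hi, _⟩ | ⟨hi, _⟩
    exacts [hi, hi.trans hop.symm]
  · refine Or.inr ⟨{i | deg a i = deg a o}, deg a o, deg a p, fun i hi => hi,
      fun i hi => (alternate i).elim (fun h => absurd h.1 hi) And.left, fun i k hki => ?_⟩
    rcases alternate i with ⟨hi, hnbr⟩ | ⟨hi, hnbr⟩
    · exact Or.inl ⟨hi, fun hk => hop (hk.symm.trans (hnbr k hki))⟩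
    · exact Or.inr ⟨fun hi' => hop (hi'.symm.trans hi), hnbr k hki⟩

end Graph

theorem finite_graph_iso_iff_regular_or_biregular_general
    {V : Type*} [Fintype V] [DecidableEq V] {a : V → V → ℝ}
    (hval : ∀ k i, a k i = 0 ∨ a k i = 1) :
    ((∀ i, 0 < deg a i) → GraphRegular a ∨ GraphBiregular a →
      ∃ e : (V → ℝ) ≃ₗ[ℝ] (V → ℝ), ∀ v w, e (prodA a v w) = prodRW a (e v) (e w)) ∧
    ((∀ k i, a k i = a i k) →
      (∀ i j : V, Relation.ReflTransGen (fun x y => a x y = 1) i j) →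
      (Matrix.of a).det ≠ 0 →
      (∃ e : (V → ℝ) ≃ₗ[ℝ] (V → ℝ), ∀ v w, e (prodRW a v w) = prodA a (e v) (e w)) →
      GraphRegular a ∨ GraphBiregular a) := by
  refine ⟨fun hdeg h => ?_, fun hsym hconn hdet ⟨e, he⟩ => ?_⟩
  · obtain ⟨α, hα⟩ := h.elim (·.exists_weights hdeg) (·.exists_weights hval hdeg)
    exact exists_prodA_equiv_prodRW_of_weights hval hdeg hα
  · obtain ⟨α, hα⟩ := exists_weights_of_prodRW_equiv_prodA hval hdet e he
    exact regular_or_biregular_of_common_neighbor hsym hconn fun i k l =>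
      deg_eq_of_common_neighbor_of_weights hsym hα

/-- for a finite connected simple graph, if it is regular or biregular then
the evolution algebras `A(G)` and `A_RW(G)` on `ℝ^V` are isomorphic as algebras;
conversely, if the graph is non-singular (invertible adjacency matrix) and `A_RW(G)` is
isomorphic to `A(G)` as an algebra, then the graph is regular or biregular. -/
theorem finite_graph_iso_iff_regular_or_biregular
    {V : Type*} [Fintype V] [DecidableEq V] [Nonempty V]
    (a : V → V → ℝ)
    (hval : ∀ k i, a k i = 0 ∨ a k i = 1)
    (hsym : ∀ k i, a k i = a i k)
    (hloop : ∀ i, a i i = 0)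
    (hconn : ∀ i j : V, Relation.ReflTransGen (fun x y => a x y = 1) i j)
    (hdeg : ∀ i, 1 ≤ deg a i) :
    ((GraphRegular a ∨ GraphBiregular a) →
      ∃ e : (V → ℝ) ≃ₗ[ℝ] (V → ℝ), ∀ v w, e (prodA a v w) = prodRW a (e v) (e w)) ∧
    ((Matrix.of fun k i => a k i).det ≠ 0 →
      (∃ e : (V → ℝ) ≃ₗ[ℝ] (V → ℝ), ∀ v w, e (prodRW a v w) = prodA a (e v) (e w)) →
      GraphRegular a ∨ GraphBiregular a) := by
  obtain ⟨iso_of, of_iso⟩ := finite_graph_iso_iff_regular_or_biregular_general hval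
  exact ⟨iso_of fun i => one_pos.trans_le (hdeg i), of_iso hsym hconn⟩
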